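/- Let (X, 𝒜, λ) be a finite measure space, (Ω, ℱ, ℙ) a probability space, and P : X × Ω → [0,1] a jointly measurable function. Define p(x) = ∫_Ω P(x,ω) dℙ(ω), the set B = {x ∈ X : p(x) > 1/2}, and for each ω the set B'(ω) = {x ∈ X : P(x,ω) > 1/2}. Then ∫_X min(p(x), 1−p(x)) dλ(x) − ∫_Ω ∫_X min(P(x,ω), 1−P(x,ω)) dλ(x) dℙ(ω) = ∫_Ω ∫_X |2P(x,ω)−1| · 𝟙_{B Δ B'(ω)}(x) dλ(x) dℙ(ω), where A Δ B = (A \ B) ∪ (B \ A) denotes the symmetric difference of sets. -/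

import Mathlib

open MeasureTheory

/-!
Classifying a point with `B` instead of with the Bayes classifier `{q > 1/2}` adds exactly
`|2 q - 1|` to the risk where the two classifiers disagree, and nothing elsewhere. The risk of a
fixed `B` at a point is affine in the posterior probability, so its expectation under the future
posterior `P (x, ·)` is its value at the current one, `p x`. Integrating the pointwise excess of
the *current* Bayes classifier under the *future* posterior therefore gives the expected reduction
of the Bayes risk.
-/

section Classifier

variable {α : Type*} {B : Set α} {q : α → ℝ}

/-- The Bayes classifier for the posterior membership probability `q`, encoded as the set of points
it accepts; ties `q x = 1/2` are rejected. -/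
def bayesClassifier (q : α → ℝ) : Set α := {x | q x > 1 / 2}

open Classical in
/-- The probability of misclassifying `x` when the classifier accepts exactly the points of `B` and
`q x` is the posterior probability that `x` ought to be accepted. -/
noncomputable def misclassificationRisk (B : Set α) (q : α → ℝ) (x : α) : ℝ :=
  if x ∈ B then 1 - q x else q x

lemma misclassificationRisk_of_mem {x : α} (hx : x ∈ B) :
    misclassificationRisk B q x = 1 - q x :=
  if_pos hx

lemma misclassificationRisk_of_notMem {x : α} (hx : x ∉ B) :
    misclassificationRisk B q x = q x :=
  if_neg hx

lemma misclassificationRisk_eq_add_indicator (B : Set α) (q : α → ℝ) :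
    misclassificationRisk B q = q + B.indicator (fun x ↦ 1 - 2 * q x) := by
  ext x
  by_cases hx : x ∈ B
  · simp only [misclassificationRisk_of_mem hx, Pi.add_apply, Set.indicator_of_mem hx]
    ring
  · simp [misclassificationRisk_of_notMem hx, hx]

lemma misclassificationRisk_bayesClassifier (q : α → ℝ) :
    misclassificationRisk (bayesClassifier q) q = fun x ↦ min (q x) (1 - q x) := by
  ext x
  by_cases hx : x ∈ bayesClassifier q
  · have hlt : 1 / 2 < q x := hx
    rw [misclassificationRisk_of_mem hx, min_eq_right (by linarith)]
  · have hle : q x ≤ 1 / 2 := not_lt.mp hx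
    rw [misclassificationRisk_of_notMem hx, min_eq_left (by linarith)]

lemma misclassificationRisk_sub_min (B : Set α) (q : α → ℝ) (x : α) :
    misclassificationRisk B q x - min (q x) (1 - q x) =
      |2 * q x - 1| * (symmDiff B (bayesClassifier q)).indicator (fun _ ↦ (1 : ℝ)) x := by
  rw [← congrFun (misclassificationRisk_bayesClassifier q) x]
  by_cases hB : x ∈ B <;> by_cases hq : x ∈ bayesClassifier q <;>
    simp only [hB, hq, misclassificationRisk_of_mem, misclassificationRisk_of_notMem,
      Set.indicator, Set.mem_symmDiff, not_true_eq_false, not_false_eq_true, and_true, and_false,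
      or_true, or_false, if_true, if_false, sub_self, mul_zero, mul_one]
  · have hle : q x ≤ 1 / 2 := not_lt.mp hq
    rw [abs_of_nonpos (by linarith)]
    ring
  · have hlt : 1 / 2 < q x := hq
    rw [abs_of_pos (by linarith)]
    ring

end Classifier

section Integrability

variable {α : Type*} [MeasurableSpace α] {μ : Measure α} {B : Set α} {q : α → ℝ}

lemma nullMeasurableSet_bayesClassifier (hq : AEMeasurable q μ) :
    NullMeasurableSet (bayesClassifier q) μ :=
  nullMeasurableSet_lt aemeasurable_const hq

lemma measure_bayesClassifier_lt_top (hq : Integrable q μ) : μ (bayesClassifier q) < ⊤ :=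
  hq.measure_gt_lt_top one_half_pos

lemma integrable_misclassificationRisk (hq : Integrable q μ) (hB : NullMeasurableSet B μ)
    (hB_fin : μ B ≠ ⊤) : Integrable (misclassificationRisk B q) μ := by
  have h_one : IntegrableOn (fun _ ↦ (1 : ℝ)) B μ := integrableOn_const hB_fin
  have h_diff : IntegrableOn (fun x ↦ 1 - 2 * q x) B μ :=
    h_one.sub (hq.integrableOn.const_mul 2)
  rw [misclassificationRisk_eq_add_indicator]
  exact hq.add (h_diff.integrable_indicator₀ hB)

lemma integrable_min_self_one_sub (hq : Integrable q μ) :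
    Integrable (fun x ↦ min (q x) (1 - q x)) μ := by
  rw [← misclassificationRisk_bayesClassifier]
  exact integrable_misclassificationRisk hq (nullMeasurableSet_bayesClassifier hq.aemeasurable)
    (measure_bayesClassifier_lt_top hq).ne

end Integrability

section RandomPosterior

variable {X Ω : Type*} [MeasurableSpace Ω] {μ : Measure Ω} [IsProbabilityMeasure μ]
  {P : X × Ω → ℝ}

lemma integral_misclassificationRisk (B : Set X) {x : X}
    (hP : Integrable (fun ω ↦ P (x, ω)) μ) :
    ∫ ω, misclassificationRisk B (fun x' ↦ P (x', ω)) x ∂μ =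
      misclassificationRisk B (fun x' ↦ ∫ ω, P (x', ω) ∂μ) x := by
  by_cases hx : x ∈ B
  · simp only [misclassificationRisk_of_mem hx]
    rw [integral_sub (integrable_const 1) hP, integral_const, probReal_univ, one_smul]
  · simp only [misclassificationRisk_of_notMem hx]

variable [MeasurableSpace X] {ν : Measure X} {B : Set X}

lemma integrable_prod_misclassificationRisk (hP : Integrable P (ν.prod μ))
    (hB : NullMeasurableSet B ν) (hB_fin : ν B ≠ ⊤) :
    Integrable (fun z : X × Ω ↦ misclassificationRisk B (fun x ↦ P (x, z.2)) z.1)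
      (ν.prod μ) := by
  have h_fst : MeasurePreserving Prod.fst (ν.prod μ) ν := measurePreserving_fst
  have h_fin : ν.prod μ (Prod.fst ⁻¹' B) ≠ ⊤ := by rwa [h_fst.measure_preimage hB]
  exact integrable_misclassificationRisk hP (hB.preimage h_fst.quasiMeasurePreserving) h_fin

variable [SFinite ν]

lemma integral_integral_misclassificationRisk (hP : Integrable P (ν.prod μ))
    (hB : NullMeasurableSet B ν) (hB_fin : ν B ≠ ⊤) :
    ∫ ω, ∫ x, misclassificationRisk B (fun x' ↦ P (x', ω)) x ∂ν ∂μ =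
      ∫ x, misclassificationRisk B (fun x' ↦ ∫ ω, P (x', ω) ∂μ) x ∂ν := by
  rw [← integral_integral_swap (integrable_prod_misclassificationRisk hP hB hB_fin)]
  refine integral_congr_ae ?_
  filter_upwards [hP.prod_right_ae] with x hx
  exact integral_misclassificationRisk B hx

theorem integral_misclassificationRisk_sub_integral_min (hP : Integrable P (ν.prod μ))
    (hB : NullMeasurableSet B ν) (hB_fin : ν B ≠ ⊤) :
    (∫ x, misclassificationRisk B (fun x' ↦ ∫ ω, P (x', ω) ∂μ) x ∂ν)
        - ∫ ω, (∫ x, min (P (x, ω)) (1 - P (x, ω)) ∂ν) ∂μ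
      = ∫ ω, (∫ x, |2 * P (x, ω) - 1| *
          (symmDiff B (bayesClassifier fun x' ↦ P (x', ω))).indicator
            (fun _ ↦ (1 : ℝ)) x ∂ν) ∂μ := by
  have h_risk := integrable_prod_misclassificationRisk hP hB hB_fin
  have h_min := integrable_min_self_one_sub hP
  calc
    _ = ∫ ω, ∫ x, misclassificationRisk B (fun x' ↦ P (x', ω)) x
          - min (P (x, ω)) (1 - P (x, ω)) ∂ν ∂μ := by
      rw [← integral_integral_misclassificationRisk hP hB hB_fin]
      exact (integral_integral_sub h_risk.swap h_min.swap).symm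
    _ = _ := by
      congr with ω
      congr with x
      exact misclassificationRisk_sub_min B (fun x' ↦ P (x', ω)) x

end RandomPosterior

theorem stmt_2_general {X Ω : Type*} [MeasurableSpace X] [MeasurableSpace Ω]
    (ν : Measure X) [SFinite ν] (μ : Measure Ω) [IsProbabilityMeasure μ]
    (P : X × Ω → ℝ) (hP : Integrable P (ν.prod μ)) :
    (∫ x, min (∫ ω, P (x, ω) ∂μ) (1 - ∫ ω, P (x, ω) ∂μ) ∂ν)
        - ∫ ω, (∫ x, min (P (x, ω)) (1 - P (x, ω)) ∂ν) ∂μ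
      = ∫ ω, (∫ x, |2 * P (x, ω) - 1| *
          Set.indicator
            (symmDiff {x' | (∫ ω', P (x', ω') ∂μ) > 1 / 2} {x' | P (x', ω) > 1 / 2})
            (fun _ ↦ (1 : ℝ)) x ∂ν) ∂μ := by
  have hp : Integrable (fun x ↦ ∫ ω, P (x, ω) ∂μ) ν := hP.integral_prod_left
  rw [← misclassificationRisk_bayesClassifier fun x ↦ ∫ ω, P (x, ω) ∂μ]
  exact integral_misclassificationRisk_sub_integral_min hP
    (nullMeasurableSet_bayesClassifier hp.aemeasurable) (measure_bayesClassifier_lt_top hp).ne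

/-- integrated form of Proposition 2.1. With `p(x) = ∫ P(x,ω) dℙ(ω)`,
`B = {x : p(x) > 1/2}` and `B'(ω) = {x : P(x,ω) > 1/2}`,
`∫ min(p,1−p) dλ − ∫∫ min(P,1−P) dλ dℙ = ∫∫ |2P−1|·𝟙_{B Δ B'(ω)} dλ dℙ`. -/
theorem stmt_2 {X Ω : Type*} [MeasurableSpace X] [MeasurableSpace Ω]
    (ν : Measure X) [IsFiniteMeasure ν] (μ : Measure Ω) [IsProbabilityMeasure μ]
    (P : X × Ω → ℝ) (hP : Measurable P) (hP01 : ∀ z, P z ∈ Set.Icc (0:ℝ) 1) :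
    (∫ x, min (∫ ω, P (x, ω) ∂μ) (1 - ∫ ω, P (x, ω) ∂μ) ∂ν)
        - ∫ ω, (∫ x, min (P (x, ω)) (1 - P (x, ω)) ∂ν) ∂μ
      = ∫ ω, (∫ x, |2 * P (x, ω) - 1| *
          Set.indicator
            (symmDiff {x' | (∫ ω', P (x', ω') ∂μ) > 1/2} {x' | P (x', ω) > 1/2})
            (fun _ => (1:ℝ)) x ∂ν) ∂μ := by
  exact stmt_2_general ν μ P (.of_mem_Icc 0 1 hP.aemeasurable (.of_forall hP01))
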